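/- Fix j ∈ {1,…,J}, assume 1 ≤ k ≤ n, and assume r > r*_j, where r*_j = inf{ B(M, M_t) : M a model with M ∈ 𝒩_j }. Then the partial bootstrap-robust nearest-neighbors value sup{ Σ_{m∈N_j} w(m)·ℓ(m)·P(m) : s > 0, P : 𝔐 → [0,∞), Σ_{m∈N_j} w(m)·P(m) = 1, Σ_{m∈𝔐} P(m) = s, Σ_{m∈N_j} P(m) ≥ s·k/n, Σ_{m∈N_{j−1}} P(m) ≤ s·(k−1)/n, Σ_{m∈𝔐} P(m)·log(P(m)/(s·M_t(m))) ≤ s·r } equals the dual value inf{ α ∈ ℝ : there exist ν > 0 and η₁, η₂ ≥ 0 such that ν·log( Σ_{m∈N_{j−1}} exp([(ℓ(m) − α)·w(m) + η₁ − η₂]/ν)·M_t(m) + Σ_{m∈N_j∖N_{j−1}} exp([(ℓ(m) − α)·w(m) + η₁]/ν)·M_t(m) + Σ_{m∈𝔐∖N_j} M_t(m) ) + r·ν − (k/n)·(η₁ − η₂) − η₂/n ≤ 0 }. -/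

import Mathlib

open Finset
open Classical

/-- A model on a finite set `𝔐` : nonnegative weights summing to one. -/
def IsModel {𝔐 : Type*} [Fintype 𝔐] (M : 𝔐 → ℝ) : Prop :=
  (∀ m, 0 ≤ M m) ∧ ∑ m, M m = 1

/-- The bootstrap (relative entropy) distance `B(M, M') = ∑ M log (M / M')`
between models, with the convention `0 · log 0 = 0` (the reference model `M'`
is assumed strictly positive). -/
noncomputable def bootDist {𝔐 : Type*} [Fintype 𝔐] (M M' : 𝔐 → ℝ) : ℝ :=
  ∑ m, if M m = 0 then 0 else M m * Real.log (M m / M' m)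

/-- Membership of a model in the `j`-th model set `𝒩_j` determined by the
nested neighborhoods `N`, with `k` nearest neighbors out of `n` data points. -/
def MemNbhdModelSet {𝔐 : Type*} [Fintype 𝔐] (N : ℕ → Finset 𝔐) (n k : ℕ)
    (j : ℕ) (M : 𝔐 → ℝ) : Prop :=
  (k : ℝ) / n ≤ ∑ m ∈ N j, M m ∧ ∑ m ∈ N (j - 1), M m ≤ ((k : ℝ) - 1) / n

/-!
By the Charnes–Cooper transformation `P = s • M` the primal value is the supremum of a ratio of two
linear functionals of `M` over a compact convex set of models: a relative entropy ball cut by two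
linear inequalities. Following Dinkelbach, a number `α` exceeds this supremum exactly when the
linear functional "numerator minus `α` times denominator" is negative on that set, so the claim
becomes Lagrangian duality for a linear objective under an entropy constraint.

Multipliers come from separating `0` from the downward closure of the image of the simplex under
the objective and the slacks. This set is closed by compactness, so the separation is strict, and
this gap allows the entropy multiplier `ν` to be raised slightly to make it positive. For `ν > 0`
the maximum of the Lagrangian over all models is the log-partition function of Donsker and
Varadhan, attained at a Gibbs model.
-/

section ConvexAlternative

theorem concaveOn_prodMk {𝕜 E F G : Type*} [Semiring 𝕜] [PartialOrder 𝕜] [AddCommMonoid E]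
    [SMul 𝕜 E] [AddCommMonoid F] [PartialOrder F] [SMul 𝕜 F] [AddCommMonoid G] [PartialOrder G]
    [SMul 𝕜 G] {K : Set E} {f : E → F} {g : E → G} (hf : ConcaveOn 𝕜 K f)
    (hg : ConcaveOn 𝕜 K g) : ConcaveOn 𝕜 K fun x ↦ (f x, g x) :=
  ⟨hf.1, fun _ hx _ hy _ _ ha hb hab ↦
    Prod.mk_le_mk.2 ⟨hf.2 hx hy ha hb hab, hg.2 hx hy ha hb hab⟩⟩

theorem linearMap_prodMk_apply {R F : Type*} [Semiring R] [AddCommMonoid F] [Module R F]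
    (φ : R × F →ₗ[R] R) (s : R) (y : F) : φ (s, y) = s * φ (1, 0) + φ (0, y) := by
  rw [← smul_eq_mul, ← map_smul, ← map_add]
  simp

variable {E F : Type*} [AddCommGroup E] [Module ℝ E] [AddCommGroup F] [PartialOrder F]
  [IsOrderedAddMonoid F] [Module ℝ F] [PosSMulMono ℝ F]

theorem map_nonneg_of_forall_le_lt {φ : F →ₗ[ℝ] ℝ} {y₀ : F} {u : ℝ} (hφ : ∀ y ≤ y₀, φ y < u)
    {e : F} (he : 0 ≤ e) : 0 ≤ φ e := by
  by_contra! hneg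
  have hT : 0 ≤ (u - φ y₀) / -φ e :=
    div_nonneg (sub_nonneg.2 (hφ y₀ le_rfl).le) (neg_nonneg.2 hneg.le)
  have hlt := hφ (y₀ - ((u - φ y₀) / -φ e) • e) (sub_le_self _ (smul_nonneg hT he))
  rw [map_sub, map_smul, smul_eq_mul, div_neg, neg_mul, div_mul_cancel₀ _ hneg.ne] at hlt
  linarith

variable [TopologicalSpace E] [TopologicalSpace F] [IsTopologicalAddGroup F]
  [ContinuousSMul ℝ F] [LocallyConvexSpace ℝ F] [OrderClosedTopology F]

open scoped Pointwise in
theorem exists_nonneg_dual_lt_of_forall_not_nonneg {K : Set E} {g : E → F} (hK : IsCompact K)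
    (hg : ConcaveOn ℝ K g) (hgc : ContinuousOn g K) (hneg : ∀ x ∈ K, ¬ 0 ≤ g x) :
    ∃ φ : StrongDual ℝ F, (∀ y, 0 ≤ y → 0 ≤ φ y) ∧ ∃ u < 0, ∀ x ∈ K, φ (g x) < u := by
  obtain rfl | ⟨x₀, hx₀⟩ := K.eq_empty_or_nonempty
  · exact ⟨0, by simp, -1, by simp, by simp⟩
  set D : Set F := {y | ∃ x ∈ K, y ≤ g x} with hD
  have hD_convex : Convex ℝ D := by
    convert hg.convex_hypograph.linear_image (LinearMap.snd ℝ E F) using 1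
    ext y
    simp [hD]
  have hD_closed : IsClosed D := by
    have hsum : g '' K + Set.Iic 0 = D := by
      ext y
      simp only [hD, Set.mem_add, Set.exists_mem_image, Set.mem_Iic, Set.mem_ofPred_eq]
      exact exists_congr fun x ↦ and_congr_right fun _ ↦
        ⟨fun ⟨z, hz, hy⟩ ↦ hy ▸ add_le_of_nonpos_right hz,
          fun hy ↦ ⟨y - g x, sub_nonpos.2 hy, add_sub_cancel _ _⟩⟩
    exact hsum ▸ isClosed_Iic.add_left_of_isCompact (hK.image_of_continuousOn hgc)
  obtain ⟨φ, u, hφu, hu⟩ := geometric_hahn_banach_closed_point hD_convex hD_closed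
    (x := 0) fun ⟨x, hx, h⟩ ↦ hneg x hx h
  exact ⟨φ, fun y ↦ map_nonneg_of_forall_le_lt (φ := φ.toLinearMap) fun z hz ↦ hφu z ⟨x₀, hx₀, hz⟩,
    u, by simpa using hu, fun x hx ↦ hφu _ ⟨x, hx, le_rfl⟩⟩

theorem exists_lagrange_multiplier {K : Set E} {f : E → ℝ} {g : E → F} {t : ℝ} (hK : IsCompact K)
    (hf : ConcaveOn ℝ K f) (hfc : ContinuousOn f K) (hg : ConcaveOn ℝ K g)
    (hgc : ContinuousOn g K) (hfeas : ∃ x ∈ K, 0 ≤ g x)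
    (hlt : ∀ x ∈ K, 0 ≤ g x → f x < t) :
    ∃ φ : StrongDual ℝ F, (∀ y, 0 ≤ y → 0 ≤ φ y) ∧
      ∃ δ > 0, ∀ x ∈ K, f x + φ (g x) < t - δ := by
  obtain ⟨φ, hφ, u, hu, hφu⟩ := exists_nonneg_dual_lt_of_forall_not_nonneg
    (g := fun x ↦ (f x - t, g x)) hK
    (concaveOn_prodMk (hf.sub (convexOn_const t hf.1)) hg)
    ((hfc.sub continuousOn_const).prodMk hgc)
    fun x hx h ↦ (hlt x hx h.2).not_ge (sub_nonneg.1 h.1)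
  have hsplit (s : ℝ) (y : F) : φ (s, y) = s * φ (1, 0) + φ (0, y) :=
    linearMap_prodMk_apply φ.toLinearMap s y
  have hpos : 0 < φ (1, 0) := by
    refine (hφ (1, 0) (by simp [Prod.le_def])).lt_of_ne' fun hzero ↦ ?_
    obtain ⟨x, hx, hgx⟩ := hfeas
    have hx_neg := (hφu x hx).trans hu
    rw [hsplit, hzero, mul_zero, zero_add] at hx_neg
    exact hx_neg.not_ge (hφ _ (by simpa [Prod.le_def] using hgx))
  refine ⟨(φ (1, 0))⁻¹ • φ ∘L ContinuousLinearMap.inr ℝ ℝ F,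
    fun y hy ↦ mul_nonneg (inv_nonneg.2 hpos.le) (hφ _ (by simpa [Prod.le_def] using hy)),
    -u / φ (1, 0), div_pos (neg_pos.2 hu) hpos, fun x hx ↦ ?_⟩
  have hx_lt := hφu x hx
  rw [hsplit] at hx_lt
  have hscaled : f x - t + φ (0, g x) / φ (1, 0) < u / φ (1, 0) := by
    rwa [lt_div_iff₀ hpos, add_mul, div_mul_cancel₀ _ hpos.ne']
  calc f x + (φ (1, 0))⁻¹ * φ (0, g x) = f x - t + φ (0, g x) / φ (1, 0) + t := by ring
    _ < u / φ (1, 0) + t := add_lt_add_left hscaled t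
    _ = t - -u / φ (1, 0) := by ring

end ConvexAlternative

section RelativeEntropy

variable {𝔐 : Type*} [Fintype 𝔐] {M q : 𝔐 → ℝ}

theorem bootDist_eq_sum (M q : 𝔐 → ℝ) : bootDist M q = ∑ m, M m * Real.log (M m / q m) := by
  refine sum_congr rfl fun m _ ↦ ?_
  split_ifs with h
  · rw [h, zero_mul]
  · rfl

theorem bootDist_eq_sum_klFun (hq : ∀ m, 0 < q m) (M : 𝔐 → ℝ) :
    bootDist M q = ∑ m, q m * InformationTheory.klFun (M m / q m) + (∑ m, M m - ∑ m, q m) := by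
  rw [bootDist_eq_sum, ← sum_sub_distrib, ← sum_add_distrib]
  refine sum_congr rfl fun m _ ↦ ?_
  have hqm := (hq m).ne'
  rw [InformationTheory.klFun_apply]
  field_simp
  ring

theorem continuous_bootDist (hq : ∀ m, 0 < q m) : Continuous fun M ↦ bootDist M q := by
  simp only [bootDist_eq_sum_klFun hq]
  fun_prop

theorem convexOn_mul_log_div {a : ℝ} (ha : 0 < a) :
    ConvexOn ℝ (Set.Ici 0) fun x ↦ x * Real.log (x / a) := by
  refine (((Real.convexOn_mul_log.comp_linearMap (a⁻¹ • LinearMap.id)).smul ha.le).subset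
    (fun x hx ↦ mul_nonneg (inv_nonneg.2 ha.le) hx) (convex_Ici 0)).congr fun x _ ↦ ?_
  simp only [Function.comp_apply, LinearMap.smul_apply, LinearMap.id_apply, smul_eq_mul]
  rw [← mul_assoc, mul_inv_cancel_left₀ ha.ne', inv_mul_eq_div]

theorem convexOn_bootDist (hq : ∀ m, 0 < q m) :
    ConvexOn ℝ (Set.Ici 0) fun M ↦ bootDist M q := by
  refine ⟨convex_Ici 0, fun M hM M' hM' a b ha hb hab ↦ ?_⟩
  simp only [bootDist_eq_sum, smul_eq_mul, mul_sum, ← sum_add_distrib]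
  exact sum_le_sum fun m _ ↦ (convexOn_mul_log_div (hq m)).2 (hM m) (hM' m) ha hb hab

theorem bootDist_self (q : 𝔐 → ℝ) : bootDist q q = 0 := by
  rw [bootDist_eq_sum]
  refine sum_eq_zero fun m _ ↦ ?_
  obtain h | h := eq_or_ne (q m) 0 <;> simp [h]

theorem bootDist_smul_smul {s : ℝ} (hs : s ≠ 0) (M q : 𝔐 → ℝ) :
    bootDist (s • M) (s • q) = s * bootDist M q := by
  simp only [bootDist_eq_sum, mul_sum, Pi.smul_apply, smul_eq_mul, mul_div_mul_left _ _ hs,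
    mul_assoc]

theorem bootDist_nonneg (hM : IsModel M) (hq : IsModel q) (hq_pos : ∀ m, 0 < q m) :
    0 ≤ bootDist M q := by
  rw [bootDist_eq_sum_klFun hq_pos, hM.2, hq.2, sub_self, add_zero]
  exact sum_nonneg fun m _ ↦ mul_nonneg (hq_pos m).le
    (InformationTheory.klFun_nonneg (div_nonneg (hM.1 m) (hq_pos m).le))

theorem IsModel.nonempty (hM : IsModel M) : Nonempty 𝔐 := by
  by_contra! h
  simpa using hM.2

/-- The partition function `∑ exp (c m) q m` of the potential `c` relative to the weights `q`. -/
noncomputable def partitionFun (q c : 𝔐 → ℝ) : ℝ := ∑ m, Real.exp (c m) * q m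

/-- The Gibbs model: the weights `q` tilted by `exp c` and renormalized. -/
noncomputable def gibbsModel (q c : 𝔐 → ℝ) (m : 𝔐) : ℝ := Real.exp (c m) * q m / partitionFun q c

section Gibbs

variable [Nonempty 𝔐]

theorem partitionFun_pos (hq : ∀ m, 0 < q m) (c : 𝔐 → ℝ) : 0 < partitionFun q c :=
  sum_pos (fun m _ ↦ mul_pos (Real.exp_pos _) (hq m)) univ_nonempty

theorem gibbsModel_pos (hq : ∀ m, 0 < q m) (c : 𝔐 → ℝ) (m : 𝔐) : 0 < gibbsModel q c m :=
  div_pos (mul_pos (Real.exp_pos _) (hq m)) (partitionFun_pos hq c)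

theorem isModel_gibbsModel (hq : ∀ m, 0 < q m) (c : 𝔐 → ℝ) : IsModel (gibbsModel q c) := by
  refine ⟨fun m ↦ (gibbsModel_pos hq c m).le, ?_⟩
  simp only [gibbsModel, ← sum_div]
  exact div_self (partitionFun_pos hq c).ne'

theorem dotProduct_sub_bootDist (hq : ∀ m, 0 < q m) (c : 𝔐 → ℝ) (hM : ∑ m, M m = 1) :
    c ⬝ᵥ M - bootDist M q = Real.log (partitionFun q c) - bootDist M (gibbsModel q c) := by
  have hZ := partitionFun_pos hq c
  have hpoint (m : 𝔐) : c m * M m - M m * Real.log (M m / q m) =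
      Real.log (partitionFun q c) * M m - M m * Real.log (M m / gibbsModel q c m) := by
    obtain h | h := eq_or_ne (M m) 0
    · simp [h]
    · have hqm := hq m
      rw [gibbsModel, Real.log_div h hqm.ne', Real.log_div h (by positivity),
        Real.log_div (by positivity) hZ.ne', Real.log_mul (by positivity) hqm.ne', Real.log_exp]
      ring
  simp only [bootDist_eq_sum, dotProduct]
  rw [← sum_sub_distrib, sum_congr rfl fun m _ ↦ hpoint m, sum_sub_distrib, ← mul_sum, hM, mul_one]

/-- The Donsker–Varadhan formula at temperature `ν`. -/
theorem isGreatest_dotProduct_sub_mul_bootDist (hq : ∀ m, 0 < q m) (c : 𝔐 → ℝ) {ν : ℝ}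
    (hν : 0 < ν) :
    IsGreatest ((fun M ↦ c ⬝ᵥ M - ν * bootDist M q) '' {M | IsModel M})
      (ν * Real.log (partitionFun q fun m ↦ c m / ν)) := by
  set G := gibbsModel q fun m ↦ c m / ν
  have hG : IsModel G := isModel_gibbsModel hq _
  have hgap {M : 𝔐 → ℝ} (hM : IsModel M) : c ⬝ᵥ M - ν * bootDist M q =
      ν * Real.log (partitionFun q fun m ↦ c m / ν) - ν * bootDist M G := by
    have hc : c = ν • fun m ↦ c m / ν := by
      ext m
      exact (mul_div_cancel₀ _ hν.ne').symm
    rw [← mul_sub, ← dotProduct_sub_bootDist hq _ hM.2, mul_sub, ← smul_eq_mul ν (_ ⬝ᵥ _),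
      ← smul_dotProduct, ← hc]
  refine ⟨⟨G, hG, ?_⟩, ?_⟩
  · simp only [hgap hG, bootDist_self, mul_zero, sub_zero]
  · rintro _ ⟨M, hM, rfl⟩
    simp only [hgap hM]
    exact sub_le_self _ (mul_nonneg hν.le (bootDist_nonneg hM hG (gibbsModel_pos hq _)))

end Gibbs

theorem neg_log_sum_le_bootDist (hq : ∀ m, 0 < q m) (hM : IsModel M) :
    -Real.log (∑ m, q m) ≤ bootDist M q := by
  have : Nonempty 𝔐 := hM.nonempty
  have h := (isGreatest_dotProduct_sub_mul_bootDist hq 0 one_pos).2 ⟨M, hM, rfl⟩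
  simpa only [partitionFun, zero_dotProduct, Pi.zero_apply, zero_div, Real.exp_zero, one_mul,
    zero_sub, neg_le] using h

end RelativeEntropy

section EntropyConstrained

variable {𝔐 ι : Type*} [Fintype 𝔐] {q a : 𝔐 → ℝ} {r : ℝ} {c : ι → 𝔐 → ℝ} {b : ι → ℝ}

/-- The models in the entropy ball of radius `r` around `q` whose moments `c i ⬝ᵥ M` are at
least `b i`. -/
def entropyFeasible (q : 𝔐 → ℝ) (r : ℝ) (c : ι → 𝔐 → ℝ) (b : ι → ℝ) : Set (𝔐 → ℝ) :=
  {M | IsModel M ∧ (∀ i, b i ≤ c i ⬝ᵥ M) ∧ bootDist M q ≤ r}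

theorem isCompact_entropyFeasible (hq : ∀ m, 0 < q m) : IsCompact (entropyFeasible q r c b) := by
  have heq : entropyFeasible q r c b =
      stdSimplex ℝ 𝔐 ∩ ((⋂ i, {M | b i ≤ c i ⬝ᵥ M}) ∩ {M | bootDist M q ≤ r}) := by
    ext M
    simp only [Set.mem_inter_iff, Set.mem_iInter]
    rfl
  rw [heq]
  exact (isCompact_stdSimplex ℝ 𝔐).inter_right
    ((isClosed_iInter fun i ↦ isClosed_le continuous_const
      (continuous_const.dotProduct continuous_id)).inter
        (isClosed_le (continuous_bootDist hq) continuous_const))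

theorem concaveOn_slack (hq : ∀ m, 0 < q m) :
    ConcaveOn ℝ (stdSimplex ℝ 𝔐) fun M ↦ (r - bootDist M q, fun i ↦ c i ⬝ᵥ M - b i) := by
  have hconv := convex_stdSimplex ℝ 𝔐
  refine concaveOn_prodMk ((concaveOn_const r hconv).sub
    ((convexOn_bootDist hq).subset (fun M hM ↦ hM.1) hconv)) ⟨hconv, ?_⟩
  intro M _ M' _ s t _ _ hst
  refine le_of_eq (funext fun i ↦ ?_)
  obtain rfl : t = 1 - s := by linarith
  simp only [Pi.add_apply, Pi.smul_apply, dotProduct_add, dotProduct_smul, smul_eq_mul]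
  ring

open scoped Pointwise in
theorem mem_smul_entropyFeasible_iff {s : ℝ} (hs : 0 < s) {P : 𝔐 → ℝ} :
    P ∈ s • entropyFeasible q r c b ↔ (∀ m, 0 ≤ P m) ∧ ∑ m, P m = s ∧
      (∀ i, s * b i ≤ c i ⬝ᵥ P) ∧ bootDist P (s • q) ≤ s * r := by
  obtain ⟨M, rfl⟩ : ∃ M, P = s • M := ⟨s⁻¹ • P, (smul_inv_smul₀ hs.ne' P).symm⟩
  rw [Set.smul_mem_smul_set_iff₀ hs.ne', bootDist_smul_smul hs.ne']
  simp only [entropyFeasible, IsModel, Set.mem_ofPred_eq, Pi.smul_apply, smul_eq_mul, ← mul_sum,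
    dotProduct_smul, mul_le_mul_iff_right₀ hs, mul_nonneg_iff_of_pos_left hs,
    mul_eq_left₀ hs.ne', and_assoc]

variable [Fintype ι]

/-- The Lagrangian of maximizing `a ⬝ᵥ M` over `entropyFeasible q r c b`, with multiplier `ν` for
the entropy constraint and `η i` for the `i`-th moment constraint. -/
noncomputable def entropyLagrangian (q : 𝔐 → ℝ) (r : ℝ) (c : ι → 𝔐 → ℝ) (b : ι → ℝ) (a : 𝔐 → ℝ)
    (ν : ℝ) (η : ι → ℝ) (M : 𝔐 → ℝ) : ℝ :=
  a ⬝ᵥ M + (ν * (r - bootDist M q) + ∑ i, η i * (c i ⬝ᵥ M - b i))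

/-- The Lagrange dual function, i.e. the maximum of `entropyLagrangian q r c b a ν η` over all
models, in closed form. -/
noncomputable def entropyDual (q : 𝔐 → ℝ) (r : ℝ) (c : ι → 𝔐 → ℝ) (b : ι → ℝ) (a : 𝔐 → ℝ)
    (ν : ℝ) (η : ι → ℝ) : ℝ :=
  ν * Real.log (partitionFun q fun m ↦ (a + ∑ i, η i • c i) m / ν) + r * ν - ∑ i, η i * b i

theorem isGreatest_entropyDual [Nonempty 𝔐] (hq : ∀ m, 0 < q m) (a : 𝔐 → ℝ) {ν : ℝ} (hν : 0 < ν)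
    (η : ι → ℝ) :
    IsGreatest (entropyLagrangian q r c b a ν η '' {M | IsModel M})
      (entropyDual q r c b a ν η) := by
  have hLagrangian (M : 𝔐 → ℝ) : entropyLagrangian q r c b a ν η M =
      (a + ∑ i, η i • c i) ⬝ᵥ M - ν * bootDist M q + (r * ν - ∑ i, η i * b i) := by
    simp only [entropyLagrangian, add_dotProduct, sum_dotProduct, smul_dotProduct, smul_eq_mul,
      mul_sub, sum_sub_distrib]
    ring
  obtain ⟨⟨M, hM, hmax⟩, hub⟩ :=
    isGreatest_dotProduct_sub_mul_bootDist hq (a + ∑ i, η i • c i) hν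
  rw [entropyDual, add_sub_assoc]
  refine ⟨⟨M, hM, (hLagrangian M).trans (congrArg (· + _) hmax)⟩, ?_⟩
  rintro _ ⟨M', hM', rfl⟩
  exact (hLagrangian M').trans_le (add_le_add_left (hub ⟨M', hM', rfl⟩) _)

theorem dotProduct_le_entropyDual (hq : ∀ m, 0 < q m) {M : 𝔐 → ℝ}
    (hM : M ∈ entropyFeasible q r c b) {ν : ℝ} (hν : 0 < ν) {η : ι → ℝ} (hη : 0 ≤ η) :
    a ⬝ᵥ M ≤ entropyDual q r c b a ν η := by
  obtain ⟨hM_model, hM_moment, hM_entropy⟩ := hM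
  have : Nonempty 𝔐 := hM_model.nonempty
  calc a ⬝ᵥ M ≤ entropyLagrangian q r c b a ν η M :=
        le_add_of_nonneg_right (add_nonneg (mul_nonneg hν.le (sub_nonneg.2 hM_entropy))
          (sum_nonneg fun i _ ↦ mul_nonneg (hη i) (sub_nonneg.2 (hM_moment i))))
    _ ≤ entropyDual q r c b a ν η := (isGreatest_entropyDual hq a hν η).2 ⟨M, hM_model, rfl⟩

theorem exists_entropyMultipliers (hq : ∀ m, 0 < q m)
    (hne : (entropyFeasible q r c b).Nonempty) {t : ℝ}
    (hlt : ∀ M ∈ entropyFeasible q r c b, a ⬝ᵥ M < t) :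
    ∃ ν ≥ 0, ∃ η : ι → ℝ, 0 ≤ η ∧ ∃ δ > 0, ∀ M, IsModel M →
      entropyLagrangian q r c b a ν η M < t - δ := by
  obtain ⟨M₀, hM₀, hM₀_moment, hM₀_entropy⟩ := hne
  have hcont : Continuous fun M ↦ (r - bootDist M q, fun i ↦ c i ⬝ᵥ M - b i) := by
    have := continuous_bootDist hq
    fun_prop
  obtain ⟨φ, hφ, δ, hδ, hφδ⟩ := exists_lagrange_multiplier (isCompact_stdSimplex ℝ 𝔐)
    ((dotProductBilin ℝ ℝ a).concaveOn (convex_stdSimplex ℝ 𝔐))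
    (continuous_const.dotProduct continuous_id).continuousOn
    (concaveOn_slack hq) hcont.continuousOn
    ⟨M₀, hM₀, sub_nonneg.2 hM₀_entropy, fun i ↦ sub_nonneg.2 (hM₀_moment i)⟩
    fun M hM hM_slack ↦ hlt M
      ⟨hM, fun i ↦ sub_nonneg.1 (hM_slack.2 i), sub_nonneg.1 hM_slack.1⟩
  have hφ_eq (s : ℝ) (y : ι → ℝ) :
      φ (s, y) = φ (1, 0) * s + ∑ i, φ (0, fun k ↦ if i = k then 1 else 0) * y i := by
    rw [← ContinuousLinearMap.coe_coe φ, linearMap_prodMk_apply, mul_comm]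
    congr 1
    simpa only [smul_eq_mul, mul_comm, LinearMap.comp_apply, LinearMap.inr_apply] using
      (φ.toLinearMap ∘ₗ LinearMap.inr ℝ ℝ (ι → ℝ)).pi_apply_eq_sum_univ y
  refine ⟨φ (1, 0), hφ _ (by simp [Prod.le_def]), fun i ↦ φ (0, fun k ↦ if i = k then 1 else 0),
    fun i ↦ hφ _ ⟨le_rfl, fun k ↦ ?_⟩, δ, hδ, fun M hM ↦ ?_⟩
  · dsimp only
    split_ifs <;> simp
  · rw [entropyLagrangian, ← hφ_eq]
    exact hφδ M hM

theorem exists_entropyDual_lt (hq : ∀ m, 0 < q m) (hne : (entropyFeasible q r c b).Nonempty)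
    {t : ℝ} (hlt : ∀ M ∈ entropyFeasible q r c b, a ⬝ᵥ M < t) :
    ∃ ν > 0, ∃ η : ι → ℝ, 0 ≤ η ∧ entropyDual q r c b a ν η < t := by
  obtain ⟨ν, hν, η, hη, δ, hδ, hLagrangian⟩ := exists_entropyMultipliers hq hne hlt
  have : Nonempty 𝔐 := hne.some_mem.1.nonempty
  -- The multiplier `ν` may vanish; as `r - bootDist M q ≤ C`, raising it by `δ / C` costs at
  -- most `δ`.
  set C := |r + Real.log (∑ m, q m)| + 1
  have hC : 0 < C := by positivity
  obtain ⟨⟨M, hM, hmax⟩, -⟩ := isGreatest_entropyDual (r := r) (c := c) (b := b) hq a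
    (add_pos_of_nonneg_of_pos hν (div_pos hδ hC)) η
  refine ⟨ν + δ / C, add_pos_of_nonneg_of_pos hν (div_pos hδ hC), η, hη, ?_⟩
  have hslack : r - bootDist M q ≤ C := by
    linarith [neg_log_sum_le_bootDist hq hM, le_abs_self (r + Real.log (∑ m, q m))]
  have hcost : δ / C * (r - bootDist M q) ≤ δ :=
    (mul_le_mul_of_nonneg_left hslack (div_pos hδ hC).le).trans_eq (div_mul_cancel₀ δ hC.ne')
  calc entropyDual q r c b a (ν + δ / C) η
      = entropyLagrangian q r c b a (ν + δ / C) η M := hmax.symm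
    _ = entropyLagrangian q r c b a ν η M + δ / C * (r - bootDist M q) := by
        simp only [entropyLagrangian]
        ring
    _ < (t - δ) + δ := add_lt_add_of_lt_of_le (hLagrangian M hM) hcost
    _ = t := sub_add_cancel t δ

end EntropyConstrained

section LinearFractional

open scoped Pointwise in
/-- The Charnes–Cooper transformation of a linear-fractional program. -/
theorem setOf_smul_normalized_eq_image_div {𝕜 E : Type*} [Field 𝕜] [LinearOrder 𝕜]
    [IsStrictOrderedRing 𝕜] [AddCommGroup E] [Module 𝕜 E] (u d : E →ₗ[𝕜] 𝕜) {K : Set E}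
    (hd : ∀ x ∈ K, 0 < d x) :
    {v | ∃ s : 𝕜, 0 < s ∧ ∃ y ∈ s • K, d y = 1 ∧ v = u y} = (fun x ↦ u x / d x) '' K := by
  ext v
  constructor
  · rintro ⟨s, -, _, ⟨x, hx, rfl⟩, hdx, rfl⟩
    rw [map_smul, smul_eq_mul] at hdx
    refine ⟨x, hx, (div_eq_iff (hd x hx).ne').2 ?_⟩
    rw [map_smul, smul_eq_mul, mul_right_comm, hdx, one_mul]
  · rintro ⟨x, hx, rfl⟩
    refine ⟨(d x)⁻¹, inv_pos.2 (hd x hx), (d x)⁻¹ • x, Set.smul_mem_smul_set hx, ?_, ?_⟩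
    · rw [map_smul, smul_eq_mul, inv_mul_cancel₀ (hd x hx).ne']
    · rw [map_smul, smul_eq_mul, inv_mul_eq_div]

variable {𝔐 ι : Type*} [Fintype 𝔐] [Fintype ι] {q u d : 𝔐 → ℝ} {r : ℝ} {c : ι → 𝔐 → ℝ}
  {b : ι → ℝ}

theorem sub_smul_dotProduct_lt_zero_iff {α : ℝ} {M : 𝔐 → ℝ} (hd : 0 < d ⬝ᵥ M) :
    (u - α • d) ⬝ᵥ M < 0 ↔ (u ⬝ᵥ M) / (d ⬝ᵥ M) < α := by
  rw [div_lt_iff₀ hd, sub_dotProduct, smul_dotProduct, smul_eq_mul, sub_neg]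

theorem sSup_div_eq_sInf_entropyDual (hq : ∀ m, 0 < q m)
    (hne : (entropyFeasible q r c b).Nonempty)
    (hd : ∀ M ∈ entropyFeasible q r c b, 0 < d ⬝ᵥ M) :
    sSup ((fun M ↦ (u ⬝ᵥ M) / (d ⬝ᵥ M)) '' entropyFeasible q r c b) =
      sInf {α : ℝ | ∃ ν : ℝ, 0 < ν ∧ ∃ η : ι → ℝ, 0 ≤ η ∧
        entropyDual q r c b (u - α • d) ν η ≤ 0} := by
  set S := (fun M ↦ (u ⬝ᵥ M) / (d ⬝ᵥ M)) '' entropyFeasible q r c b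
  set T := {α : ℝ | ∃ ν : ℝ, 0 < ν ∧ ∃ η : ι → ℝ, 0 ≤ η ∧
    entropyDual q r c b (u - α • d) ν η ≤ 0}
  have hS_bdd : BddAbove S := (isCompact_entropyFeasible hq).bddAbove_image <|
    (continuous_const.dotProduct continuous_id).continuousOn.div
      (continuous_const.dotProduct continuous_id).continuousOn fun M hM ↦ (hd M hM).ne'
  have hweak : ∀ α ∈ T, sSup S ≤ α := by
    rintro α ⟨ν, hν, η, hη, hle⟩
    refine csSup_le (hne.image _) (Set.forall_mem_image.2 fun M hM ↦ not_lt.1 fun hlt ↦ ?_)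
    have hM_le := (dotProduct_le_entropyDual hq hM hν hη).trans hle
    rw [sub_dotProduct, smul_dotProduct, smul_eq_mul, sub_nonpos, ← div_le_iff₀ (hd M hM)] at hM_le
    exact hM_le.not_gt hlt
  have hstrong : ∀ α, sSup S < α → α ∈ T := fun α hα ↦ by
    obtain ⟨ν, hν, η, hη, hlt⟩ := exists_entropyDual_lt (a := u - α • d) hq hne fun M hM ↦
      (sub_smul_dotProduct_lt_zero_iff (hd M hM)).2
        ((le_csSup hS_bdd (Set.mem_image_of_mem _ hM)).trans_lt hα)
    exact ⟨ν, hν, η, hη, hlt.le⟩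
  exact (csInf_eq_of_forall_ge_of_forall_gt_exists_lt ⟨_, hstrong _ (lt_add_one _)⟩ hweak
    fun α hα ↦ let ⟨α', hα', hlt⟩ := exists_between hα; ⟨α', hstrong α' hα', hlt⟩).symm

end LinearFractional

section NearestNeighbors

variable {𝔐 : Type*} [Fintype 𝔐]

theorem indicator_dotProduct {R : Type*} [NonUnitalNonAssocSemiring R] (B : Finset 𝔐)
    (f M : 𝔐 → R) :
    (B : Set 𝔐).indicator f ⬝ᵥ M = ∑ m ∈ B, f m * M m := by
  simp only [dotProduct, Set.indicator_apply, mem_coe, ite_mul, zero_mul, sum_ite_mem, univ_inter]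

/-- The moments whose lower bounds `![β, -γ]` say that a model gives mass at least `β` to `B` and at
most `γ` to `A`. -/
noncomputable def nbhdMoments (A B : Finset 𝔐) : Fin 2 → 𝔐 → ℝ :=
  ![(B : Set 𝔐).indicator 1, -(A : Set 𝔐).indicator 1]

theorem forall_le_nbhdMoments_dotProduct_iff {A B : Finset 𝔐} {b : Fin 2 → ℝ} {P : 𝔐 → ℝ} :
    (∀ i, b i ≤ nbhdMoments A B i ⬝ᵥ P) ↔ b 0 ≤ ∑ m ∈ B, P m ∧ ∑ m ∈ A, P m ≤ -b 1 := by
  simp only [Fin.forall_fin_two, nbhdMoments, Matrix.cons_val_zero, Matrix.cons_val_one,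
    neg_dotProduct, indicator_dotProduct, Pi.one_apply, one_mul, le_neg]

theorem partitionFun_nbhd {A B : Finset 𝔐} (hAB : A ⊆ B) (w ℓ q : 𝔐 → ℝ) (α ν : ℝ)
    (η : Fin 2 → ℝ) :
    (partitionFun q fun m ↦ ((B : Set 𝔐).indicator (w * ℓ) - α • (B : Set 𝔐).indicator w +
        ∑ i, η i • nbhdMoments A B i) m / ν) =
      (∑ m ∈ A, Real.exp (((ℓ m - α) * w m + η 0 - η 1) / ν) * q m) +
      (∑ m ∈ B \ A, Real.exp (((ℓ m - α) * w m + η 0) / ν) * q m) +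
      (∑ m ∈ univ \ B, q m) := by
  rw [partitionFun, ← sum_sdiff (subset_univ B), ← sum_sdiff hAB, add_comm,
    add_comm (∑ m ∈ B \ A, _)]
  simp only [Fin.sum_univ_two, nbhdMoments, Matrix.cons_val_zero, Matrix.cons_val_one,
    Pi.add_apply, Pi.sub_apply, Pi.smul_apply, Pi.neg_apply, Set.indicator_apply, mem_coe,
    smul_eq_mul, Pi.mul_apply, Pi.one_apply]
  congr 1
  · congr 1 <;> refine sum_congr rfl fun m hm ↦ ?_
    · simp only [if_pos (hAB hm), if_pos hm]
      ring_nf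
    · obtain ⟨hmB, hmA⟩ := mem_sdiff.1 hm
      simp only [if_pos hmB, if_neg hmA]
      ring_nf
  · refine sum_congr rfl fun m hm ↦ ?_
    have hmB : m ∉ B := (mem_sdiff.1 hm).2
    simp only [if_neg hmB, if_neg fun hmA ↦ hmB (hAB hmA), mul_zero, sub_zero, neg_zero, add_zero,
      zero_div, Real.exp_zero, one_mul]

theorem entropyDual_nbhd {A B : Finset 𝔐} (hAB : A ⊆ B) (w ℓ q : 𝔐 → ℝ) (r β γ α ν : ℝ)
    (η : Fin 2 → ℝ) :
    entropyDual q r (nbhdMoments A B) ![β, -γ]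
        ((B : Set 𝔐).indicator (w * ℓ) - α • (B : Set 𝔐).indicator w) ν η =
      ν * Real.log
          ((∑ m ∈ A, Real.exp (((ℓ m - α) * w m + η 0 - η 1) / ν) * q m) +
           (∑ m ∈ B \ A, Real.exp (((ℓ m - α) * w m + η 0) / ν) * q m) +
           (∑ m ∈ univ \ B, q m)) +
        r * ν - (β * η 0 - γ * η 1) := by
  rw [entropyDual, partitionFun_nbhd hAB]
  simp only [Fin.sum_univ_two, Matrix.cons_val_zero, Matrix.cons_val_one]
  ring

open scoped Pointwise in
theorem mem_smul_entropyFeasible_nbhd_iff {A B : Finset 𝔐} {q P : 𝔐 → ℝ} {r β γ s : ℝ}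
    (hs : 0 < s) :
    P ∈ s • entropyFeasible q r (nbhdMoments A B) ![β, -γ] ↔ (∀ m, 0 ≤ P m) ∧ ∑ m, P m = s ∧
      (s * β ≤ ∑ m ∈ B, P m ∧ ∑ m ∈ A, P m ≤ s * γ) ∧ bootDist P (s • q) ≤ s * r := by
  rw [mem_smul_entropyFeasible_iff hs, forall_le_nbhdMoments_dotProduct_iff]
  simp only [Matrix.cons_val_zero, Matrix.cons_val_one, mul_neg, neg_neg]

theorem indicator_dotProduct_pos {B : Finset 𝔐} {w M : 𝔐 → ℝ} (hw : ∀ m ∈ B, 0 < w m)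
    (hM : ∀ m ∈ B, 0 ≤ M m) (hMB : 0 < ∑ m ∈ B, M m) : 0 < (B : Set 𝔐).indicator w ⬝ᵥ M := by
  obtain ⟨m, hm, hMm⟩ := exists_lt_of_sum_lt (by rwa [sum_const_zero] : ∑ m ∈ B, 0 < ∑ m ∈ B, M m)
  rw [indicator_dotProduct]
  exact sum_pos' (fun m hm ↦ mul_nonneg (hw m hm).le (hM m hm)) ⟨m, hm, mul_pos (hw m hm) hMm⟩

theorem bootstrap_robust_nearest_neighbors_duality_general {q : 𝔐 → ℝ} (hq : ∀ m, 0 < q m)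
    (w ℓ : 𝔐 → ℝ) (A B : Finset 𝔐) (hAB : A ⊆ B) (hw : ∀ m ∈ B, 0 < w m) (β γ r : ℝ) (hβ : 0 < β)
    (hfeas : ∃ M, IsModel M ∧ (β ≤ ∑ m ∈ B, M m ∧ ∑ m ∈ A, M m ≤ γ) ∧ bootDist M q ≤ r) :
    sSup {v : ℝ | ∃ s : ℝ, 0 < s ∧ ∃ P : 𝔐 → ℝ, (∀ m, 0 ≤ P m) ∧
        (∑ m ∈ B, w m * P m) = 1 ∧ (∑ m, P m) = s ∧
        s * β ≤ ∑ m ∈ B, P m ∧ (∑ m ∈ A, P m) ≤ s * γ ∧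
        (∑ m, if P m = 0 then 0 else P m * Real.log (P m / (s * q m))) ≤ s * r ∧
        v = ∑ m ∈ B, w m * ℓ m * P m} =
    sInf {α : ℝ | ∃ ν : ℝ, 0 < ν ∧ ∃ η₁ : ℝ, 0 ≤ η₁ ∧ ∃ η₂ : ℝ, 0 ≤ η₂ ∧
        ν * Real.log
            ((∑ m ∈ A, Real.exp (((ℓ m - α) * w m + η₁ - η₂) / ν) * q m) +
             (∑ m ∈ B \ A, Real.exp (((ℓ m - α) * w m + η₁) / ν) * q m) +
             (∑ m ∈ univ \ B, q m)) +
          r * ν - (β * η₁ - γ * η₂) ≤ 0} := by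
  set u := (B : Set 𝔐).indicator (w * ℓ)
  set d := (B : Set 𝔐).indicator w
  set K := entropyFeasible q r (nbhdMoments A B) ![β, -γ]
  have hne : K.Nonempty := by
    obtain ⟨M, hM, ⟨hMB, hMA⟩, hMr⟩ := hfeas
    exact ⟨M, hM, forall_le_nbhdMoments_dotProduct_iff.2 ⟨hMB, by simpa using hMA⟩, hMr⟩
  have hd : ∀ M ∈ K, 0 < d ⬝ᵥ M := fun M ⟨hM, hM_moment, _⟩ ↦
    indicator_dotProduct_pos hw (fun m _ ↦ hM.1 m)
      (hβ.trans_le (forall_le_nbhdMoments_dotProduct_iff.1 hM_moment).1)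
  trans sSup ((fun M ↦ (u ⬝ᵥ M) / (d ⬝ᵥ M)) '' K)
  · congr 1
    refine Eq.trans ?_ <|
      setOf_smul_normalized_eq_image_div (dotProductBilin ℝ ℝ u) (dotProductBilin ℝ ℝ d) hd
    ext v
    refine exists_congr fun s ↦ and_congr_right fun hs ↦ exists_congr fun P ↦ ?_
    rw [mem_smul_entropyFeasible_nbhd_iff hs]
    simp only [dotProductBilin_apply_apply, u, d, indicator_dotProduct, Pi.mul_apply, bootDist,
      Pi.smul_apply, smul_eq_mul]
    tauto
  · rw [sSup_div_eq_sInf_entropyDual hq hne hd]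
    congr 1
    ext α
    refine exists_congr fun ν ↦ and_congr_right fun _ ↦ ⟨?_, ?_⟩
    · rintro ⟨η, hη, hle⟩
      exact ⟨η 0, hη 0, η 1, hη 1, (entropyDual_nbhd hAB ..).symm.trans_le hle⟩
    · rintro ⟨η₁, hη₁, η₂, hη₂, hle⟩
      exact ⟨![η₁, η₂], Fin.forall_fin_two.2 ⟨hη₁, hη₂⟩, (entropyDual_nbhd hAB ..).trans_le hle⟩

end NearestNeighbors

/-- **dual representation of the partial bootstrap robust
nearest-neighbors cost.** For a robustness radius `r` strictly larger than the
minimum radius `r*_j`, the value of the `j`-th entropy-constrained partial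
primal program equals the value of its Lagrangian dual. -/
theorem bootstrap_robust_nearest_neighbors_duality
    {𝔐 : Type*} [Fintype 𝔐] [Nonempty 𝔐]
    (w ℓ : 𝔐 → ℝ) (hw : ∀ m, 0 < w m)
    (Mt : 𝔐 → ℝ) (hMt : IsModel Mt) (hMtpos : ∀ m, 0 < Mt m)
    (n k : ℕ) (hk : 1 ≤ k) (hkn : k ≤ n)
    (J : ℕ) (N : ℕ → Finset 𝔐)
    (hN0 : N 0 = ∅) (hNJ : N J = Finset.univ)
    (hNcard : ∀ j ≤ J, (N j).card = j)
    (hNmono : ∀ j < J, N j ⊆ N (j + 1))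
    (j : ℕ) (hj : j ∈ Finset.Icc 1 J)
    (hfeas : ∃ M : 𝔐 → ℝ, IsModel M ∧ MemNbhdModelSet N n k j M)
    (r : ℝ)
    (hr : sInf {b : ℝ | ∃ M : 𝔐 → ℝ, IsModel M ∧ MemNbhdModelSet N n k j M ∧
        b = bootDist M Mt} < r) :
    sSup {v : ℝ | ∃ s : ℝ, 0 < s ∧ ∃ P : 𝔐 → ℝ, (∀ m, 0 ≤ P m) ∧
        (∑ m ∈ N j, w m * P m) = 1 ∧ (∑ m, P m) = s ∧
        s * (k : ℝ) / n ≤ ∑ m ∈ N j, P m ∧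
        (∑ m ∈ N (j - 1), P m) ≤ s * ((k : ℝ) - 1) / n ∧
        (∑ m, if P m = 0 then 0 else P m * Real.log (P m / (s * Mt m))) ≤ s * r ∧
        v = ∑ m ∈ N j, w m * ℓ m * P m} =
    sInf {α : ℝ | ∃ ν : ℝ, 0 < ν ∧ ∃ η₁ : ℝ, 0 ≤ η₁ ∧ ∃ η₂ : ℝ, 0 ≤ η₂ ∧
        ν * Real.log
            ((∑ m ∈ N (j - 1), Real.exp (((ℓ m - α) * w m + η₁ - η₂) / ν) * Mt m) +
             (∑ m ∈ N j \ N (j - 1), Real.exp (((ℓ m - α) * w m + η₁) / ν) * Mt m) +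
             (∑ m ∈ Finset.univ \ N j, Mt m)) +
          r * ν - ((k : ℝ) / n) * (η₁ - η₂) - η₂ / n ≤ 0} := by
  obtain ⟨hj_pos, hjJ⟩ := Finset.mem_Icc.1 hj
  have hsub : N (j - 1) ⊆ N j := by
    simpa only [Nat.sub_add_cancel hj_pos] using hNmono (j - 1) (by omega)
  have hfeas_r : ∃ M, IsModel M ∧ MemNbhdModelSet N n k j M ∧ bootDist M Mt ≤ r := by
    obtain ⟨M₀, hM₀, hM₀_mem⟩ := hfeas
    by_contra! hgt
    refine hr.not_ge (le_csInf ⟨_, M₀, hM₀, hM₀_mem, rfl⟩ ?_)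
    rintro _ ⟨M, hM, hM_mem, rfl⟩
    exact (hgt M hM hM_mem).le
  have hk_div : (0 : ℝ) < k / n := div_pos (by exact_mod_cast hk) (by exact_mod_cast hk.trans hkn)
  have hdual (X η₁ η₂ : ℝ) : X - (k : ℝ) / n * (η₁ - η₂) - η₂ / n =
      X - ((k : ℝ) / n * η₁ - ((k : ℝ) - 1) / n * η₂) := by ring
  simp only [mul_div_assoc, hdual]
  exact bootstrap_robust_nearest_neighbors_duality_general hMtpos w ℓ (N (j - 1)) (N j) hsub
    (fun m _ ↦ hw m) (k / n) ((k - 1) / n) r hk_div hfeas_r
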